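/- arXiv:0705.1171 — 2 statements merged into one kernel-verified Lean document; each statement's English description precedes it below -/
import Mathlib

section
/- Let A be a simple cusp algebra, set n₀ = cod(A) − 1, and let π be a primitive for A. Then every f ∈ A has a unique representation f(z) = p(π(z)) + z^{2n₀+2} g(z), where p is a polynomial of degree at most n₀ and g ∈ O(𝔻); uniqueness means that both p and g are uniquely determined by f. -/
/-!
The orders of vanishing at `0` of the elements of a simple cusp algebra `A` form a numerical
semigroup. It contains `2` (the order of a primitive `π`) but not `1`. If it contained an odd
number `2 j + 1`, it would contain all larger odd numbers and all even ones; since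
`z ^ N O(𝔻) ⊆ A` for some `N`, the monomials `z, z ^ 3, …, z ^ (2 j - 1)` would then span
`O(𝔻) / A`, so `cod A ≤ j` (`cod_le`). Hence no element of `A` has odd order below
`2 cod A = 2 n₀ + 2`.

Existence follows by successive approximation: if `f - p ∘ π` vanishes to order `2 k` with
`k ≤ n₀`, subtracting a multiple of `π ^ k` raises the order by one, and the absence of odd orders
raises it to `2 k + 2`. Uniqueness of `p` holds because a nonzero polynomial of degree at most `n₀`
in `π` has order at most `2 n₀` (`poly_eq_zero`); uniqueness of `g` is then cancellation of a power
of `z` (`eq_zero_of_zfun_pow_mul`). Orders are handled through `HasLead`, the statement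
`f = c z ^ m + O(z ^ (m + 1))`.
-/

open scoped Classical

noncomputable section

/-- The open unit disk in `ℂ`. -/
def 𝔻 : Set ℂ := Metric.ball 0 1

lemma zero_mem_disk : (0 : ℂ) ∈ 𝔻 := Metric.mem_ball_self one_pos

/-- The origin, as a point of the disk. -/
def d0 : 𝔻 := ⟨0, zero_mem_disk⟩

/-- A function on the disk is holomorphic if it agrees on `𝔻` with a function
that is (complex) differentiable on `𝔻`. -/
def IsHolo (f : 𝔻 → ℂ) : Prop :=
  ∃ F : ℂ → ℂ, DifferentiableOn ℂ F 𝔻 ∧ ∀ z : 𝔻, f z = F z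

/-- `O(𝔻)`: the algebra of all holomorphic functions on the disk. -/
def HolDisk : Subalgebra ℂ (𝔻 → ℂ) where
  carrier := {f | IsHolo f}
  mul_mem' := by
    rintro f g ⟨F, hF, hf⟩ ⟨G, hG, hg⟩
    exact ⟨F * G, hF.mul hG, fun z => by simp [hf z, hg z]⟩
  add_mem' := by
    rintro f g ⟨F, hF, hf⟩ ⟨G, hG, hg⟩
    exact ⟨F + G, hF.add hG, fun z => by simp [hf z, hg z]⟩
  one_mem' := ⟨fun _ => 1, differentiableOn_const 1, fun _ => rfl⟩
  zero_mem' := ⟨fun _ => 0, differentiableOn_const 0, fun _ => rfl⟩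
  algebraMap_mem' := fun c => ⟨fun _ => c, differentiableOn_const c, fun _ => rfl⟩

/-- The `j`-th complex derivative of a holomorphic function on the disk, at a
point `a` (junk value `0` for non-holomorphic functions).  This is well defined
on `𝔻` since any two extensions agree on the open set `𝔻`. -/
def der (j : ℕ) (a : ℂ) (f : 𝔻 → ℂ) : ℂ :=
  if h : IsHolo f then iteratedDeriv j h.choose a else 0

/-- The `k`-th Taylor coefficient at `0` of a holomorphic function on the disk. -/
def taylorCoeff (k : ℕ) (f : 𝔻 → ℂ) : ℂ := der k 0 f / (Nat.factorial k : ℂ)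

/-- The coordinate function `z` on the disk. -/
def zfun : 𝔻 → ℂ := fun z => (z : ℂ)

/-- `z^m O(𝔻)`, as a subspace of functions on the disk. -/
def zO (m : ℕ) : Submodule ℂ (𝔻 → ℂ) where
  carrier := {f | ∃ g, IsHolo g ∧ f = zfun ^ m * g}
  add_mem' := by
    rintro f₁ f₂ ⟨g₁, hg₁, rfl⟩ ⟨g₂, hg₂, rfl⟩
    exact ⟨g₁ + g₂, add_mem (show g₁ ∈ HolDisk from hg₁) (show g₂ ∈ HolDisk from hg₂),
      by ring⟩
  zero_mem' := ⟨0, (HolDisk : Subalgebra ℂ (𝔻 → ℂ)).zero_mem, by simp⟩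
  smul_mem' := by
    rintro c f ⟨g, hg, rfl⟩
    exact ⟨c • g, SMulMemClass.smul_mem c (show g ∈ HolDisk from hg), by
      ext z; simp [zfun]; ring⟩

/-- The quotient vector space `O(𝔻)/A`. -/
abbrev OmodA (A : Subalgebra ℂ (𝔻 → ℂ)) :=
  HolDisk.toSubmodule ⧸ (A.toSubmodule.comap HolDisk.toSubmodule.subtype)

/-- `cod(A) = dim O(𝔻)/A`. -/
def cod (A : Subalgebra ℂ (𝔻 → ℂ)) : ℕ := Module.finrank ℂ (OmodA A)

/-- `ord(A) = min {k : z^{k+1} O(𝔻) ⊆ A}`. -/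
def ord (A : Subalgebra ℂ (𝔻 → ℂ)) : ℕ :=
  sInf {k : ℕ | (zO (k + 1) : Set (𝔻 → ℂ)) ⊆ (A : Set (𝔻 → ℂ))}

/-- `con(A) = max {n : f⁽ʲ⁾(0) = 0 for all f ∈ A and all 1 ≤ j ≤ n}`. -/
def con (A : Subalgebra ℂ (𝔻 → ℂ)) : ℕ :=
  sSup {n : ℕ | ∀ f ∈ A, ∀ j, 1 ≤ j → j ≤ n → der j 0 f = 0}

/-- A cusp algebra: a unital subalgebra of `O(𝔻)` of finite codimension
containing `z^m O(𝔻)` for some `m ≥ 2`. -/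
def IsCuspAlgebra (A : Subalgebra ℂ (𝔻 → ℂ)) : Prop :=
  A ≤ HolDisk ∧ FiniteDimensional ℂ (OmodA A) ∧
    ∃ m, 2 ≤ m ∧ (zO m : Set (𝔻 → ℂ)) ⊆ (A : Set (𝔻 → ℂ))

/-- A simple cusp algebra: a cusp algebra of contact one. -/
def IsSimpleCuspAlgebra (A : Subalgebra ℂ (𝔻 → ℂ)) : Prop :=
  IsCuspAlgebra A ∧ con A = 1

/-- A primitive for a simple cusp algebra:  `π ∈ A` with `π(0) = 0`,
`π'(0) = 0`, `π''(0) = 2`. -/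
def IsPrimitive (A : Subalgebra ℂ (𝔻 → ℂ)) (π : 𝔻 → ℂ) : Prop :=
  π ∈ A ∧ π d0 = 0 ∧ der 1 0 π = 0 ∧ der 2 0 π = 2

/-- `A_n = A ∩ z^{2n} O(𝔻)`. -/
def An (A : Subalgebra ℂ (𝔻 → ℂ)) (n : ℕ) : Submodule ℂ (𝔻 → ℂ) :=
  A.toSubmodule ⊓ zO (2 * n)

/-- `E_n = A_n / A_{n+1}`. -/
abbrev En (A : Subalgebra ℂ (𝔻 → ℂ)) (n : ℕ) :=
  An A n ⧸ ((An A (n + 1)).comap (An A n).subtype)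

/-! ### Orders of vanishing and leading coefficients -/

lemma mem_zO {m : ℕ} {f : 𝔻 → ℂ} :
    f ∈ zO m ↔ ∃ g, IsHolo g ∧ ∀ z : 𝔻, f z = (z : ℂ) ^ m * g z := by
  constructor
  · rintro ⟨g, hg, rfl⟩
    exact ⟨g, hg, fun z => by simp [zfun]⟩
  · rintro ⟨g, hg, h⟩
    exact ⟨g, hg, by ext z; simp [zfun, h z]⟩

lemma isHolo_zfun : IsHolo zfun := ⟨id, differentiableOn_id, fun _ => rfl⟩

lemma zO_le_hol (m : ℕ) {f : 𝔻 → ℂ} (hf : f ∈ zO m) : IsHolo f := by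
  obtain ⟨g, hg, rfl⟩ := hf
  exact HolDisk.mul_mem (HolDisk.pow_mem isHolo_zfun m) hg

lemma mul_mem_zO {m n : ℕ} {f g : 𝔻 → ℂ} (hf : f ∈ zO m) (hg : g ∈ zO n) :
    f * g ∈ zO (m + n) := by
  obtain ⟨u, hu, rfl⟩ := hf
  obtain ⟨v, hv, rfl⟩ := hg
  exact ⟨u * v, HolDisk.mul_mem hu hv, by ring⟩

lemma zfun_pow_mem_zO (m : ℕ) : zfun ^ m ∈ zO m := ⟨1, HolDisk.one_mem, by simp⟩

/-- `f = c z ^ m + O(z ^ (m + 1))`: the function `f` vanishes to order at least `m` at the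
origin and its `m`-th Taylor coefficient is `c` (which may be zero). -/
def HasLead (f : 𝔻 → ℂ) (m : ℕ) (c : ℂ) : Prop := f - c • zfun ^ m ∈ zO (m + 1)

lemma HasLead.congr_sub {f g : 𝔻 → ℂ} {m : ℕ} {c : ℂ} (hf : HasLead f m c)
    (hg : HasLead g m c) : f - g ∈ zO (m + 1) := by
  have := (zO (m + 1)).sub_mem hf hg
  simpa using this

lemma HasLead.smul {f : 𝔻 → ℂ} {m : ℕ} {c : ℂ} (hf : HasLead f m c) (a : ℂ) :
    HasLead (a • f) m (a * c) := by
  have := (zO (m + 1)).smul_mem a hf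
  rwa [smul_sub, smul_smul] at this

lemma HasLead.mul {f g : 𝔻 → ℂ} {m n : ℕ} {c d : ℂ} (hf : HasLead f m c)
    (hg : HasLead g n d) : HasLead (f * g) (m + n) (c * d) := by
  obtain ⟨u, hu, hf⟩ := hf
  obtain ⟨v, hv, hg⟩ := hg
  rw [sub_eq_iff_eq_add] at hf hg
  refine ⟨u * v * zfun + c • v + d • u, ?_, ?_⟩
  · exact HolDisk.add_mem (HolDisk.add_mem (HolDisk.mul_mem (HolDisk.mul_mem hu hv) isHolo_zfun)
      (HolDisk.smul_mem hv c)) (HolDisk.smul_mem hu d)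
  · ext z
    simp [hf, hg]
    ring

lemma hasLead_one : HasLead 1 0 1 := by simp [HasLead]

lemma HasLead.pow {f : 𝔻 → ℂ} {m : ℕ} (hf : HasLead f m 1) (k : ℕ) :
    HasLead (f ^ k) (m * k) 1 := by
  induction k with
  | zero => simpa using hasLead_one
  | succ k ih => simpa [pow_succ, Nat.mul_succ] using ih.mul hf

lemma HasLead.mem {f : 𝔻 → ℂ} {m : ℕ} (hf : HasLead f m 0) : f ∈ zO (m + 1) := by
  simpa [HasLead] using hf

/-- First-order Taylor expansion at the origin, with the divided slope as remainder. -/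
lemma isHolo_expand {g : 𝔻 → ℂ} (hg : IsHolo g) : HasLead g 0 (g d0) := by
  obtain ⟨G, hG, h⟩ := hg
  refine mem_zO.2 ⟨fun z => dslope G 0 z, ⟨dslope G 0, ?_, fun _ => rfl⟩, fun z => ?_⟩
  · exact (Complex.differentiableOn_dslope (Metric.ball_mem_nhds 0 one_pos)).2 hG
  · have := sub_smul_dslope G 0 (z : ℂ)
    simp only [sub_zero, smul_eq_mul] at this
    simp [this, h, d0]

lemma exists_hasLead {m : ℕ} {f : 𝔻 → ℂ} (hf : f ∈ zO m) : ∃ c, HasLead f m c := by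
  obtain ⟨g, hg, rfl⟩ := hf
  refine ⟨g d0, ?_⟩
  have h := mul_mem_zO (zfun_pow_mem_zO m) (isHolo_expand hg)
  rw [pow_zero, mul_sub, mul_smul_comm, mul_one] at h
  simpa [HasLead] using h

/-! ### Leading coefficients as derivatives at the origin -/

lemma der_eq {f : 𝔻 → ℂ} {F : ℂ → ℂ} (hF : DifferentiableOn ℂ F 𝔻) (h : ∀ z : 𝔻, f z = F z)
    (j : ℕ) : der j 0 f = iteratedDeriv j F 0 := by
  have hf : IsHolo f := ⟨F, hF, h⟩
  rw [der, dif_pos hf]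
  refine Set.EqOn.iteratedDeriv_of_isOpen (s := 𝔻) ?_ Metric.isOpen_ball j zero_mem_disk
  intro z hz
  rw [← hf.choose_spec.2 ⟨z, hz⟩, h ⟨z, hz⟩]

/-- The leading coefficient is a Taylor coefficient; in particular it is determined by `f`. -/
lemma HasLead.der_eq {f : 𝔻 → ℂ} {m : ℕ} {c : ℂ} (hf : HasLead f m c) :
    der m 0 f = m.factorial * c := by
  obtain ⟨g, ⟨G, hG, hgG⟩, h⟩ := hf
  rw [sub_eq_iff_eq_add] at h
  have hH : DifferentiableOn ℂ (fun z => c + z * G z) 𝔻 :=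
    (differentiableOn_const c).add (differentiableOn_id.mul hG)
  have hP : DifferentiableOn ℂ (fun z : ℂ => z ^ m) 𝔻 := (differentiable_id.pow m).differentiableOn
  have hn : 𝔻 ∈ nhds (0 : ℂ) := Metric.ball_mem_nhds 0 one_pos
  rw [_root_.der_eq (F := fun z => z ^ m * (c + z * G z)) (hP.mul hH)
      (fun z => by simp [h, zfun, hgG]; ring),
    iteratedDeriv_fun_mul (hP.analyticAt hn).contDiffAt (hH.analyticAt hn).contDiffAt]
  simp only [iteratedDeriv_fun_pow_zero]
  rw [Finset.sum_eq_single m]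
  · simp
  · intro b _ hb
    simp [hb]
  · simp

lemma hasLead_zero_of_mem {f : 𝔻 → ℂ} {m : ℕ} (hf : f ∈ zO (m + 1)) : HasLead f m 0 := by
  simpa [HasLead] using hf

lemma HasLead.eq_zero {f : 𝔻 → ℂ} {m : ℕ} {c : ℂ} (hf : HasLead f m c)
    (h : f ∈ zO (m + 1)) : c = 0 := by
  have h1 := hf.der_eq
  rw [(hasLead_zero_of_mem h).der_eq] at h1
  have : (m.factorial : ℂ) ≠ 0 := by exact_mod_cast m.factorial_ne_zero
  simpa [this] using h1

lemma zO_anti {m n : ℕ} (h : m ≤ n) : zO n ≤ zO m := by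
  obtain ⟨k, rfl⟩ := Nat.exists_eq_add_of_le h
  rintro _ ⟨g, hg, rfl⟩
  exact ⟨zfun ^ k * g, HolDisk.mul_mem (HolDisk.pow_mem isHolo_zfun k) hg, by ring⟩

/-- Division by `z ^ m` is injective on `O(𝔻)`, also at the origin. -/
lemma eq_zero_of_zfun_pow_mul {m : ℕ} {g : 𝔻 → ℂ} (hg : IsHolo g) (h : zfun ^ m * g = 0) :
    g = 0 := by
  have h0 : g d0 = 0 := by
    refine HasLead.eq_zero (f := zfun ^ m * g) (m := m) ?_ (h ▸ (zO _).zero_mem)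
    have := (show HasLead (zfun ^ m) m 1 by simp [HasLead]).mul (isHolo_expand hg)
    simpa using this
  ext z
  by_cases hz : (z : ℂ) = 0
  · have : z = d0 := Subtype.ext hz
    simpa [this] using h0
  · have := congrFun h z
    simpa [zfun, hz] using this

/-! ### Contact, primitives and codimension -/

/-- `con A = 1` forces the defining supremum to be attained: an unbounded set would have supremum
`0` in `ℕ`. -/
lemma con_one {A : Subalgebra ℂ (𝔻 → ℂ)} (hA : con A = 1) {f : 𝔻 → ℂ} (hf : f ∈ A) :
    der 1 0 f = 0 := by
  set S := {n : ℕ | ∀ f ∈ A, ∀ j, 1 ≤ j → j ≤ n → der j 0 f = 0} with hS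
  have hne : S.Nonempty := ⟨0, fun f _ j h1 h2 => by omega⟩
  have hbdd : BddAbove S := by
    by_contra hb
    have h := Nat.sSup_of_not_bddAbove hb
    change con A = 0 at h
    omega
  have h1 : con A ∈ S := Nat.sSup_mem hne hbdd
  rw [hA] at h1
  exact h1 f hf 1 le_rfl le_rfl

lemma IsPrimitive.hasLead {A : Subalgebra ℂ (𝔻 → ℂ)} (hA : A ≤ HolDisk) {π : 𝔻 → ℂ}
    (hπ : IsPrimitive A π) : HasLead π 2 1 := by
  obtain ⟨hm, h0, h1, h2⟩ := hπ
  have hz1 : π ∈ zO 1 := by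
    have := isHolo_expand (hA hm)
    rw [h0] at this
    exact this.mem
  obtain ⟨c, hc⟩ := exists_hasLead hz1
  have := hc.der_eq
  rw [h1] at this
  obtain rfl : c = 0 := by simpa using this.symm
  obtain ⟨d, hd⟩ := exists_hasLead hc.mem
  have := hd.der_eq
  rw [h2] at this
  obtain rfl : d = 1 := by simpa using this.symm
  exact hd

/-- If `A` contains elements of order `2` and `2 j + 1`, then modulo `A` every holomorphic function
is a combination of `z, z ^ 3, …, z ^ (2 j - 1)`, so the codimension is at most `j`. -/
lemma cod_le {A : Subalgebra ℂ (𝔻 → ℂ)} (hA : IsCuspAlgebra A) {π h : 𝔻 → ℂ} {j : ℕ}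
    (hπA : π ∈ A) (hπ : HasLead π 2 1) (hhA : h ∈ A) (hh : HasLead h (2 * j + 1) 1) :
    cod A ≤ j := by
  set b : Fin j → HolDisk.toSubmodule :=
    fun i => ⟨zfun ^ (2 * (i : ℕ) + 1), HolDisk.pow_mem isHolo_zfun _⟩ with hb
  set S : Submodule ℂ (𝔻 → ℂ) := Submodule.span ℂ (Set.range fun i => (b i : 𝔻 → ℂ)) with hS
  obtain ⟨hAH, -, N, -, hN⟩ := hA
  -- Every order `k` is attained on `A ⊔ S`: by `π ^ i` if even, by `z ^ k` if odd and below
  -- `2 * j + 1`, and by `h * π ^ i` if odd and at least `2 * j + 1`.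
  have step (k : ℕ) : ∃ q ∈ A.toSubmodule ⊔ S, HasLead q k 1 := by
    obtain ⟨i, rfl | rfl⟩ := k.even_or_odd'
    · exact ⟨π ^ i, Submodule.mem_sup_left (A.pow_mem hπA i), hπ.pow i⟩
    · rcases lt_or_ge i j with hi | hi
      · refine ⟨zfun ^ (2 * i + 1), Submodule.mem_sup_right
          (Submodule.subset_span ⟨⟨i, hi⟩, rfl⟩), by simp [HasLead]⟩
      · refine ⟨h * π ^ (i - j), Submodule.mem_sup_left (A.mul_mem hhA (A.pow_mem hπA _)), ?_⟩
        have := hh.mul (hπ.pow (i - j))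
        rw [mul_one] at this
        convert this using 1
        omega
  have key (f : 𝔻 → ℂ) (hf : IsHolo f) (k : ℕ) : ∃ q ∈ A.toSubmodule ⊔ S, f - q ∈ zO k := by
    induction k with
    | zero => exact ⟨0, Submodule.zero_mem _, f, hf, by simp⟩
    | succ k ih =>
      obtain ⟨q, hq, hfq⟩ := ih
      obtain ⟨c, hc⟩ := exists_hasLead hfq
      obtain ⟨r, hr, hlr⟩ := step k
      refine ⟨q + c • r, Submodule.add_mem _ hq (Submodule.smul_mem _ c hr), ?_⟩
      have h1 := hlr.smul c
      rw [mul_one] at h1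
      have := hc.congr_sub h1
      rwa [sub_sub] at this
  have hall (f : 𝔻 → ℂ) (hf : IsHolo f) : f ∈ A.toSubmodule ⊔ S := by
    obtain ⟨q, hq, hfq⟩ := key f hf N
    have := Submodule.add_mem _ (Submodule.mem_sup_left (hN hfq) : f - q ∈ A.toSubmodule ⊔ S) hq
    simpa using this
  have hspan : Submodule.span ℂ (Set.range fun i =>
      Submodule.mkQ (A.toSubmodule.comap HolDisk.toSubmodule.subtype) (b i)) = ⊤ := by
    rw [eq_top_iff]
    rintro x -
    obtain ⟨⟨f, hf⟩, rfl⟩ := Submodule.mkQ_surjective _ x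
    obtain ⟨a, ha, s, hs, has⟩ := Submodule.mem_sup.1 (hall f hf)
    obtain ⟨c, hc⟩ := (Submodule.mem_span_range_iff_exists_fun ℂ).1 hs
    refine (Submodule.mem_span_range_iff_exists_fun ℂ).2 ⟨c, ?_⟩
    simp only [← map_smul, ← map_sum]
    rw [← sub_eq_zero, ← map_sub, Submodule.mkQ_apply, Submodule.Quotient.mk_eq_zero]
    have hcoe : HolDisk.toSubmodule.subtype (∑ i, c i • b i) = s := by
      rw [← hc, map_sum]
      rfl
    have hfs : s - f = -a := by rw [← has]; abel
    rw [Submodule.mem_comap, map_sub, hcoe]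
    change s - f ∈ _
    rw [hfs]
    exact Submodule.neg_mem _ ha
  have hcard := finrank_range_le_card (R := ℂ) (fun i =>
      Submodule.mkQ (A.toSubmodule.comap HolDisk.toSubmodule.subtype) (b i))
  rw [Set.finrank, hspan, finrank_top, Fintype.card_fin] at hcard
  exact hcard

/-! ### Polynomials in a primitive -/

lemma aeval_mem {A : Subalgebra ℂ (𝔻 → ℂ)} {π : 𝔻 → ℂ} (hπ : π ∈ A) (p : Polynomial ℂ) :
    Polynomial.aeval π p ∈ A :=
  Algebra.adjoin_le (Set.singleton_subset_iff.2 hπ) (Polynomial.aeval_mem_adjoin_singleton ℂ π)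

lemma aeval_apply' (p : Polynomial ℂ) (π : 𝔻 → ℂ) (z : 𝔻) :
    (Polynomial.aeval π p) z = p.eval (π z) := by
  induction p using Polynomial.induction_on' with
  | add p q => simp
  | monomial n a => simp [Polynomial.aeval_monomial]

/-- Polynomials in `π` of degree at most `n` are determined modulo `z ^ (2 n + 2)`: if `k` is the
order of `p` at `0`, then `p ∘ π` has order exactly `2 k`. -/
lemma poly_eq_zero {π : 𝔻 → ℂ} (hH : IsHolo π) (hπ0 : π d0 = 0)
    (hπ : HasLead π 2 1) {n : ℕ} {p : Polynomial ℂ} (hp : p.natDegree ≤ n)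
    (h : Polynomial.aeval π p ∈ zO (2 * n + 2)) : p = 0 := by
  by_contra h0
  obtain ⟨q, hq, hnd⟩ := p.exists_eq_pow_rootMultiplicity_mul_and_not_dvd h0 0
  set k := p.rootMultiplicity 0 with hk
  have hkn : k ≤ n := by
    have hd := Polynomial.natDegree_le_of_dvd (p.pow_rootMultiplicity_dvd 0) h0
    simp only [Polynomial.natDegree_pow, Polynomial.natDegree_X_sub_C, mul_one] at hd
    exact hd.trans hp
  have hq0 : q.coeff 0 ≠ 0 := by
    intro hc
    apply hnd
    rw [Polynomial.C_0, sub_zero]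
    exact Polynomial.X_dvd_iff.2 hc
  have hqH : IsHolo (Polynomial.aeval π q) := aeval_mem (A := HolDisk) hH q
  have h1 := (hπ.pow k).mul (isHolo_expand hqH)
  rw [aeval_apply', hπ0, ← Polynomial.coeff_zero_eq_eval_zero, one_mul, add_zero] at h1
  have hpq : Polynomial.aeval π p = π ^ k * Polynomial.aeval π q := by
    rw [hq, Polynomial.C_0, sub_zero, map_mul, map_pow, Polynomial.aeval_X]
  rw [← hpq] at h1
  exact hq0 (h1.eq_zero (zO_anti (by omega) h))

/-! ### Existence and uniqueness of the representation -/

/-- Every `f ∈ A` has a unique representation `f = p ∘ π + z^{2n₀+2} g` with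
`p` a polynomial of degree at most `n₀ = cod(A) - 1` and `g ∈ O(𝔻)`. -/
theorem stmt_1 (A : Subalgebra ℂ (𝔻 → ℂ)) (hA : IsSimpleCuspAlgebra A)
    (n₀ : ℕ) (hn₀ : n₀ = cod A - 1) (π : 𝔻 → ℂ) (hπ : IsPrimitive A π) :
    ∀ f ∈ A, ∃! pg : Polynomial ℂ × (𝔻 → ℂ),
      pg.1.natDegree ≤ n₀ ∧ IsHolo pg.2 ∧
        ∀ z : 𝔻, f z = pg.1.eval (π z) + (z : ℂ) ^ (2 * n₀ + 2) * pg.2 z := by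
  intro f hf
  obtain ⟨hcusp, hcon⟩ := hA
  have hπA : π ∈ A := hπ.1
  have hAH : A ≤ HolDisk := hcusp.1
  have hlead : HasLead π 2 1 := hπ.hasLead hAH
  have hmem (p : Polynomial ℂ) : Polynomial.aeval π p ∈ A :=
    aeval_mem hπA p
  -- Elements of `A` have no odd order below `2 n₀ + 2`.
  -- At order `1` this is the contact condition; at order `2 k + 1` with `0 < k ≤ n₀` it would give
  -- `cod A ≤ k ≤ cod A - 1`, impossible as `k > 0` rules out the truncated case `cod A = 0`.
  have hodd (r : 𝔻 → ℂ) (hr : r ∈ A) (k : ℕ) (hk : k ≤ n₀) (c : ℂ)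
      (hc : HasLead r (2 * k + 1) c) : c = 0 := by
    by_contra hc0
    rcases Nat.eq_zero_or_pos k with rfl | hkpos
    · have := hc.der_eq
      rw [mul_zero, zero_add, con_one hcon hr] at this
      exact hc0 (by simpa using this.symm)
    · have h1 := hc.smul c⁻¹
      rw [inv_mul_cancel₀ hc0] at h1
      have := cod_le hcusp hπA hlead (A.smul_mem hr c⁻¹) h1
      omega
  -- Each pass kills the coefficient of `z ^ (2 k)` with a multiple of `π ^ k`; the coefficient of
  -- `z ^ (2 k + 1)` then vanishes by `hodd`.
  have hex (k : ℕ) (hk : k ≤ n₀ + 1) : ∃ p : Polynomial ℂ, p.natDegree ≤ n₀ ∧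
      f - Polynomial.aeval π p ∈ zO (2 * k) := by
    induction k with
    | zero => exact ⟨0, by simp, f, hAH hf, by simp⟩
    | succ k ih =>
      obtain ⟨p, hp, hfp⟩ := ih (by omega)
      obtain ⟨c, hc⟩ := exists_hasLead hfp
      have h1 := (hlead.pow k).smul c
      rw [mul_one] at h1
      have h2 := hc.congr_sub h1
      have hE : f - Polynomial.aeval π p - c • π ^ k =
          f - Polynomial.aeval π (p + Polynomial.C c * Polynomial.X ^ k) := by
        rw [map_add, map_mul, Polynomial.aeval_C, map_pow, Polynomial.aeval_X,
          ← Algebra.smul_def, sub_sub]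
      rw [hE] at h2
      obtain ⟨d, hd⟩ := exists_hasLead h2
      obtain rfl := hodd _ (A.sub_mem hf (hmem _)) k (by omega) d hd
      refine ⟨_, ?_, hd.mem⟩
      refine (Polynomial.natDegree_add_le _ _).trans (max_le hp ?_)
      exact (Polynomial.natDegree_C_mul_X_pow_le c k).trans (by omega)
  obtain ⟨p, hp, hfp⟩ := hex (n₀ + 1) le_rfl
  obtain ⟨g, hg, hfg⟩ := mem_zO.1 hfp
  refine ⟨(p, g), ⟨hp, hg, fun z => ?_⟩, ?_⟩
  · have := hfg z
    rw [Pi.sub_apply, aeval_apply', sub_eq_iff_eq_add'] at this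
    exact this
  · rintro ⟨q, u⟩ ⟨hq, hu, hfu⟩
    have hfq : f - Polynomial.aeval π q ∈ zO (2 * (n₀ + 1)) :=
      mem_zO.2 ⟨u, hu, fun z => by
        rw [Pi.sub_apply, aeval_apply', sub_eq_iff_eq_add']; exact hfu z⟩
    have hpq : q - p = 0 := by
      refine poly_eq_zero (hAH hπA) hπ.2.1 hlead (n := n₀)
        ((Polynomial.natDegree_sub_le _ _).trans (max_le hq hp)) ?_
      have := (zO _).sub_mem hfp hfq
      rwa [sub_sub_sub_cancel_left, ← map_sub] at this
    obtain rfl := sub_eq_zero.1 hpq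
    have hug : u - g = 0 := by
      refine eq_zero_of_zfun_pow_mul (m := 2 * (n₀ + 1)) (HolDisk.sub_mem hu hg) ?_
      ext z
      have h1 := hfg z
      rw [Pi.sub_apply, aeval_apply', hfu z, add_sub_cancel_left] at h1
      simp only [Pi.mul_apply, Pi.pow_apply, Pi.sub_apply, zfun, Pi.zero_apply, mul_sub]
      rw [sub_eq_zero]
      exact h1
    rw [sub_eq_zero.1 hug]

end
end

section
/- Every simple cusp algebra A of codimension n + 1 (i.e., with cod(A) = n + 1) has a primitive π such that the Taylor coefficient π̂(2k) of π at 0 vanishes for all 2 ≤ k ≤ n. -/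
/-!
Taylor expansion at `0` is an algebra map from `O(𝔻)` to `ℂ⟦X⟧`: linearity is clear and
multiplicativity is the Leibniz rule. Contact one says that the first Taylor coefficient vanishes on
all of `A`, while some element of `A` has a nonzero second coefficient; after subtracting a constant
and rescaling, this yields a primitive `p`, whose expansion is `X ^ 2 * u` with `u(0) = 1`. Its
powers `p ^ k` lie in `A` and have expansion `X ^ (2 * k) * u ^ k`, so subtracting the multiple
`π̂(2k) p ^ k` from a primitive `π` kills its coefficient of order `2k` without touching the lower
ones. Doing this for `k = 2, …, n` in turn produces the required primitive.
-/

open scoped Classical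

noncomputable section

/-- The Taylor expansion at `0` of a function on the disk, as a formal power series
(`0` for a non-holomorphic function, because `der` is). -/
def taylorPS (f : 𝔻 → ℂ) : PowerSeries ℂ := PowerSeries.mk fun k => taylorCoeff k f

lemma coeff_taylorPS (k : ℕ) (f : 𝔻 → ℂ) :
    PowerSeries.coeff k (taylorPS f) = taylorCoeff k f := by
  simp [taylorPS]

lemma disk_mem_nhds : 𝔻 ∈ nhds (0 : ℂ) := Metric.isOpen_ball.mem_nhds zero_mem_disk

lemma contDiffAt_of_disk {F : ℂ → ℂ} (hF : DifferentiableOn ℂ F 𝔻) (n : ℕ) :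
    ContDiffAt ℂ n F 0 :=
  (hF.analyticAt disk_mem_nhds).contDiffAt

lemma taylorPS_add {f g : 𝔻 → ℂ} (hf : f ∈ HolDisk) (hg : g ∈ HolDisk) :
    taylorPS (f + g) = taylorPS f + taylorPS g := by
  obtain ⟨F, hF, hf⟩ := hf
  obtain ⟨G, hG, hg⟩ := hg
  ext k
  rw [map_add]
  simp only [coeff_taylorPS, taylorCoeff]
  rw [der_eq hF hf, der_eq hG hg,
    der_eq (f := f + g) (hF.add hG) (fun z => by simp [hf z, hg z]),
    iteratedDeriv_add (contDiffAt_of_disk hF k) (contDiffAt_of_disk hG k), add_div]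

lemma taylorPS_mul {f g : 𝔻 → ℂ} (hf : f ∈ HolDisk) (hg : g ∈ HolDisk) :
    taylorPS (f * g) = taylorPS f * taylorPS g := by
  obtain ⟨F, hF, hf⟩ := hf
  obtain ⟨G, hG, hg⟩ := hg
  ext k
  rw [PowerSeries.coeff_mul]
  simp only [coeff_taylorPS, taylorCoeff, der_eq hF hf, der_eq hG hg]
  rw [der_eq (f := f * g) (hF.mul hG) (fun z => by simp [hf z, hg z]),
    iteratedDeriv_mul (contDiffAt_of_disk hF k) (contDiffAt_of_disk hG k),
    Finset.Nat.sum_antidiagonal_eq_sum_range_succ_mk, Finset.sum_div]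
  refine Finset.sum_congr rfl fun i hi => ?_
  have hik : i ≤ k := by simpa [Nat.lt_succ_iff] using hi
  have h1 : ((k.factorial : ℕ) : ℂ) ≠ 0 := by exact_mod_cast k.factorial_ne_zero
  have h2 : ((i.factorial : ℕ) : ℂ) ≠ 0 := by exact_mod_cast i.factorial_ne_zero
  have h3 : (((k - i).factorial : ℕ) : ℂ) ≠ 0 := by exact_mod_cast (k - i).factorial_ne_zero
  rw [Nat.cast_choose ℂ hik]
  field_simp

lemma taylorPS_const (c : ℂ) :
    taylorPS (algebraMap ℂ (𝔻 → ℂ) c) = PowerSeries.C c := by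
  ext k
  rw [coeff_taylorPS, taylorCoeff,
    der_eq (f := algebraMap ℂ (𝔻 → ℂ) c) (F := fun _ => c) (differentiableOn_const c) (fun z => rfl),
    iteratedDeriv_const, PowerSeries.coeff_C]
  split_ifs with h <;> simp [h]

lemma taylorPS_smul (c : ℂ) {f : 𝔻 → ℂ} (hf : f ∈ HolDisk) :
    taylorPS (c • f) = PowerSeries.C c * taylorPS f := by
  rw [Algebra.smul_def, taylorPS_mul (HolDisk.algebraMap_mem c) hf, taylorPS_const]

lemma taylorPS_pow {f : 𝔻 → ℂ} (hf : f ∈ HolDisk) (k : ℕ) :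
    taylorPS (f ^ k) = taylorPS f ^ k := by
  induction k with
  | zero => simpa using taylorPS_const 1
  | succ k ih => rw [pow_succ, taylorPS_mul (pow_mem hf k) hf, ih, pow_succ]

lemma taylorCoeff_zero {f : 𝔻 → ℂ} (hf : f ∈ HolDisk) : taylorCoeff 0 f = f d0 := by
  obtain ⟨F, hF, hf⟩ := hf
  rw [hf d0]
  simp [taylorCoeff, der_eq hF hf, d0]

lemma taylorCoeff_add_smul {f g : 𝔻 → ℂ} (hf : f ∈ HolDisk) (hg : g ∈ HolDisk) (c : ℂ) (j : ℕ) :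
    taylorCoeff j (f + c • g) = taylorCoeff j f + c * taylorCoeff j g := by
  rw [← coeff_taylorPS, taylorPS_add hf (HolDisk.smul_mem hg c), taylorPS_smul c hg, map_add,
    PowerSeries.coeff_C_mul, coeff_taylorPS, coeff_taylorPS]

lemma isPrimitive_iff {A : Subalgebra ℂ (𝔻 → ℂ)} (hA : A ≤ HolDisk) (p : 𝔻 → ℂ) :
    IsPrimitive A p ↔
      p ∈ A ∧ taylorCoeff 0 p = 0 ∧ taylorCoeff 1 p = 0 ∧ taylorCoeff 2 p = 1 := by
  refine and_congr_right fun hp => ?_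
  rw [taylorCoeff_zero (hA hp)]
  simp [taylorCoeff, div_eq_iff]

/-- The `k`-th power of a primitive vanishes to order exactly `2k`, with leading coefficient `1`. -/
lemma taylorCoeff_pow_primitive {p : 𝔻 → ℂ} (hp : p ∈ HolDisk) (h0 : taylorCoeff 0 p = 0)
    (h1 : taylorCoeff 1 p = 0) (h2 : taylorCoeff 2 p = 1) (k : ℕ) :
    (∀ j < 2 * k, taylorCoeff j (p ^ k) = 0) ∧ taylorCoeff (2 * k) (p ^ k) = 1 := by
  obtain ⟨u, hu⟩ : PowerSeries.X ^ 2 ∣ taylorPS p := by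
    rw [PowerSeries.X_pow_dvd_iff]
    intro m hm
    interval_cases m <;> simpa [coeff_taylorPS]
  have hu0 : PowerSeries.constantCoeff u = 1 := by
    have := PowerSeries.coeff_X_pow_mul u 2 0
    rw [← hu, coeff_taylorPS] at this
    simpa [h2] using this.symm
  have key : taylorPS (p ^ k) = PowerSeries.X ^ (2 * k) * u ^ k := by
    rw [taylorPS_pow hp, hu, mul_pow, ← pow_mul]
  refine ⟨fun j hj => ?_, ?_⟩
  · rw [← coeff_taylorPS, key, PowerSeries.coeff_X_pow_mul', if_neg (by omega)]
  · rw [← coeff_taylorPS, key, PowerSeries.coeff_X_pow_mul', if_pos le_rfl]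
    simp [hu0]

lemma exists_primitive {A : Subalgebra ℂ (𝔻 → ℂ)} (hA : IsSimpleCuspAlgebra A) :
    ∃ p, IsPrimitive A p := by
  obtain ⟨⟨hle, -⟩, hcon⟩ := hA
  set S : Set ℕ := {n : ℕ | ∀ f ∈ A, ∀ j, 1 ≤ j → j ≤ n → der j 0 f = 0} with hS
  have hcon' : sSup S = 1 := hcon
  -- An unbounded `S` would have the junk supremum `0`.
  have hb : BddAbove S := by
    by_contra h
    rw [Nat.sSup_of_not_bddAbove h] at hcon'
    exact zero_ne_one hcon'
  have h1 : 1 ∈ S := by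
    have h0 : S.Nonempty := ⟨0, fun f _ j hj hj' => by omega⟩
    simpa [hcon'] using Nat.sSup_mem h0 hb
  have h2 : 2 ∉ S := fun h => by
    have := le_csSup hb h
    omega
  have hd1 : ∀ f ∈ A, taylorCoeff 1 f = 0 := fun f hf => by
    simp [taylorCoeff, h1 f hf 1 le_rfl le_rfl]
  obtain ⟨f, hf, hf2⟩ : ∃ f ∈ A, taylorCoeff 2 f ≠ 0 := by
    by_contra! h
    refine h2 fun f hf j hj hj' => ?_
    obtain rfl | rfl : j = 1 ∨ j = 2 := by omega
    · exact h1 f hf 1 le_rfl le_rfl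
    · simpa [taylorCoeff] using h f hf
  set g : 𝔻 → ℂ := f + (-taylorCoeff 0 f) • (1 : 𝔻 → ℂ) with hg
  have hgA : g ∈ A := A.add_mem hf (A.smul_mem A.one_mem _)
  have hone : ∀ j, taylorCoeff j (1 : 𝔻 → ℂ) = if j = 0 then 1 else 0 := fun j => by
    rw [← coeff_taylorPS, ← map_one (algebraMap ℂ (𝔻 → ℂ)), taylorPS_const, PowerSeries.coeff_C]
  have hgc : ∀ j, taylorCoeff j g = taylorCoeff j f + -taylorCoeff 0 f * if j = 0 then 1 else 0 :=
    fun j => by rw [hg, taylorCoeff_add_smul (hle hf) HolDisk.one_mem, hone]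
  have hs : ∀ j, taylorCoeff j ((taylorCoeff 2 f)⁻¹ • g) = (taylorCoeff 2 f)⁻¹ * taylorCoeff j g :=
    fun j => by
      rw [← coeff_taylorPS, taylorPS_smul _ (hle hgA), PowerSeries.coeff_C_mul, coeff_taylorPS]
  refine ⟨(taylorCoeff 2 f)⁻¹ • g, (isPrimitive_iff hle _).2 ⟨A.smul_mem hgA _, ?_, ?_, ?_⟩⟩
  · simp [hs, hgc]
  · exact hd1 _ (A.smul_mem hgA _)
  · simp [hs, hgc, hf2]

/-- Every simple cusp algebra of codimension `n + 1` has a primitive `π` whose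
Taylor coefficients `π̂(2k)` vanish for all `2 ≤ k ≤ n`. -/
theorem stmt_10 (A : Subalgebra ℂ (𝔻 → ℂ)) (n : ℕ)
    (hA : IsSimpleCuspAlgebra A) (hcod : cod A = n + 1) :
    ∃ π : 𝔻 → ℂ, IsPrimitive A π ∧
      ∀ k, 2 ≤ k → k ≤ n → taylorCoeff (2 * k) π = 0 := by
  have hle : A ≤ HolDisk := hA.1.1
  obtain ⟨p, hp⟩ := exists_primitive hA
  rw [isPrimitive_iff hle] at hp
  obtain ⟨hpA, hp0, hp1, hp2⟩ := hp
  clear hcod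
  induction n with
  | zero => exact ⟨p, (isPrimitive_iff hle p).2 ⟨hpA, hp0, hp1, hp2⟩, fun k _ _ => by omega⟩
  | succ m ih =>
    obtain ⟨q, hq, hqk⟩ := ih
    rcases Nat.lt_or_ge m 1 with hm | hm
    · exact ⟨q, hq, fun k _ _ => by omega⟩
    rw [isPrimitive_iff hle] at hq
    obtain ⟨hqA, hq0, hq1, hq2⟩ := hq
    obtain ⟨hlow, hlead⟩ := taylorCoeff_pow_primitive (hle hpA) hp0 hp1 hp2 (m + 1)
    have hpm : p ^ (m + 1) ∈ A := A.pow_mem hpA _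
    set c := -taylorCoeff (2 * (m + 1)) q
    have hc := taylorCoeff_add_smul (hle hqA) (hle hpm) c
    refine ⟨q + c • p ^ (m + 1), (isPrimitive_iff hle _).2
      ⟨A.add_mem hqA (A.smul_mem hpm c), ?_, ?_, ?_⟩, fun k hk hk' => ?_⟩
    · rw [hc, hlow 0 (by omega), hq0]; simp
    · rw [hc, hlow 1 (by omega), hq1]; simp
    · rw [hc, hlow 2 (by omega), hq2]; simp
    · rcases Nat.lt_or_ge m k with h | h
      · obtain rfl : k = m + 1 := by omega
        rw [hc, hlead]; simp [c]
      · rw [hc, hlow (2 * k) (by omega), hqk k hk h]; simp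

end
end
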